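/- Let n ≥ 1, let H be a Hilbert space, and let T = (T₁,…,Tₙ) be a quasi-nilpotent n-tuple of bounded operators on H, i.e. r(T) = 0. Then there exists a weight sequence μ = {μ_β}_{|β|≥1} of nonnegative reals with sup_{α∈𝔽ₙ⁺} μ_{g_iα} < ∞ for each i, whose associated weighted left multi-shift W = (W₁,…,Wₙ) on F²(Hₙ) satisfies r(W) = 0 and each W_i is a compact operator, together with a closed subspace M ⊆ ℓ²(𝔽ₙ⁺; H) invariant under each W_i^*⊗I_H and a bounded invertible operator S : H → M such that T_i^* = S⁻¹((W_i^*⊗I_H)|_M)S for each i ∈ {1,…,n}. -/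

import Mathlib

open Filter ContinuousLinearMap
open scoped ComplexConjugate

noncomputable section

attribute [local instance] Classical.decEq

abbrev Word (n : ℕ) := FreeMonoid (Fin n)

abbrev Fock (n : ℕ) := lp (fun _ : Word n => ℂ) 2

def fockE {n : ℕ} (α : Word n) : Fock n := lp.single 2 α 1

def wordOp {n : ℕ} {H : Type*} [NormedAddCommGroup H] [InnerProductSpace ℂ H]
    (T : Fin n → H →L[ℂ] H) (α : Word n) : H →L[ℂ] H :=
  ((FreeMonoid.toList α).map T).prod

def wordOfFn {n k : ℕ} (f : Fin k → Fin n) : Word n := FreeMonoid.ofList (List.ofFn f)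

def rowSum {n : ℕ} {H : Type*} [NormedAddCommGroup H] [InnerProductSpace ℂ H]
    [CompleteSpace H] (T : Fin n → H →L[ℂ] H) (k : ℕ) : H →L[ℂ] H :=
  ∑ f : Fin k → Fin n, wordOp T (wordOfFn f) * adjoint (wordOp T (wordOfFn f))

def jsr {n : ℕ} {H : Type*} [NormedAddCommGroup H] [InnerProductSpace ℂ H]
    [CompleteSpace H] (T : Fin n → H →L[ℂ] H) : ℝ :=
  limUnder atTop fun k : ℕ => ‖rowSum T k‖ ^ ((1 : ℝ) / (2 * k))

def muProd {n : ℕ} (μ : Word n → ℝ) (β α : Word n) : ℝ :=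
  ((List.range (FreeMonoid.length β)).map
    fun j => μ (FreeMonoid.ofList ((FreeMonoid.toList β).drop j) * α)).prod

def IsWeightedShift {n : ℕ} (μ : Word n → ℝ) (W : Fin n → Fock n →L[ℂ] Fock n) : Prop :=
  ∀ (i : Fin n) (α : Word n),
    W i (fockE α) = (μ (FreeMonoid.of i * α) : ℂ) • fockE (FreeMonoid.of i * α)

def BddWeights {n : ℕ} (μ : Word n → ℝ) : Prop :=
  ∀ i : Fin n, BddAbove (Set.range fun α : Word n => μ (FreeMonoid.of i * α))

def IsWeightedShiftTensor {n : ℕ} {H : Type*} [NormedAddCommGroup H] [InnerProductSpace ℂ H]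
    (μ : Word n → ℝ)
    (Wt : Fin n → lp (fun _ : Word n => H) 2 →L[ℂ] lp (fun _ : Word n => H) 2) : Prop :=
  ∀ (i : Fin n) (α : Word n) (h : H),
    Wt i (lp.single 2 α h) = (μ (FreeMonoid.of i * α) : ℂ) • lp.single 2 (FreeMonoid.of i * α) h

def polyOp {n : ℕ} {H : Type*} [NormedAddCommGroup H] [InnerProductSpace ℂ H]
    (T : Fin n → H →L[ℂ] H) (c : Word n →₀ ℂ) : H →L[ℂ] H :=
  c.sum fun α z => z • wordOp T α

/-!
Choose an antitone positive sequence `m → 0` with `‖rowSum T k‖ ≤ 4⁻ᵏ (m 1 ⋯ m k)²` and give the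
word `β` the weight `m |β|`. The `k`-th row sum of the resulting shift has norm at most
`(m 1 ⋯ m k)²`, so its joint spectral radius is a limit of geometric means of `m` and vanishes, and
each `W i` is a norm limit of finite-rank operators because `m → 0`. The map
`h ↦ (T_α^* h / (m 1 ⋯ m |α|))_α` is bounded by the choice of `m`, is bounded below because its
coordinate at the empty word is `h`, and intertwines `T_i^*` with `W_i^* ⊗ I`.
-/

section ScalarSequences

theorem exists_antitone_pos_tendsto_zero_ge {a : ℕ → ℝ} (ha : Tendsto a atTop (nhds 0)) :
    ∃ m : ℕ → ℝ, Antitone m ∧ (∀ k, 0 < m k) ∧ Tendsto m atTop (nhds 0) ∧ ∀ k, a k ≤ m k := by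
  have hbdd (k : ℕ) : BddAbove (Set.range fun j => |a (k + j)|) :=
    ha.abs.bddAbove_range.mono (Set.range_subset_iff.2 fun j => Set.mem_range_self (k + j))
  have hsup_nonneg (k : ℕ) : 0 ≤ ⨆ j, |a (k + j)| := Real.iSup_nonneg fun _ => abs_nonneg _
  have hsup_anti : Antitone fun k => ⨆ j, |a (k + j)| := fun k l hkl => ciSup_le fun j => by
    simpa only [← add_assoc, Nat.add_sub_cancel' hkl] using le_ciSup (hbdd k) (l - k + j)
  have hsup_tendsto : Tendsto (fun k => ⨆ j, |a (k + j)|) atTop (nhds 0) := by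
    refine tendsto_order.2 ⟨fun ε hε => .of_forall fun k => hε.trans_le (hsup_nonneg k),
      fun ε hε => ?_⟩
    obtain ⟨N, hN⟩ := eventually_atTop.1 (ha.abs.eventually_lt_const (u := ε / 2) (by simpa))
    filter_upwards [eventually_ge_atTop N] with k hk
    exact (ciSup_le fun j => (hN (k + j) (by omega)).le).trans_lt (half_lt_self hε)
  refine ⟨fun k => (⨆ j, |a (k + j)|) + 1 / ((k : ℝ) + 1), fun k l hkl => ?_, fun k => ?_, ?_,
    fun k => ?_⟩
  · exact add_le_add (hsup_anti hkl) (by gcongr)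
  · exact add_pos_of_nonneg_of_pos (hsup_nonneg k) (by positivity)
  · simpa using hsup_tendsto.add (tendsto_one_div_add_atTop_nhds_zero_nat (𝕜 := ℝ))
  · calc a k ≤ |a (k + 0)| := le_abs_self _
      _ ≤ ⨆ j, |a (k + j)| := le_ciSup (hbdd k) 0
      _ ≤ _ := le_add_of_nonneg_right (by positivity)

theorem pow_le_prod_range_of_antitone {m : ℕ → ℝ} (hm : Antitone m) {k : ℕ} {x : ℝ} (hx : 0 ≤ x)
    (hxm : x ≤ m k) : x ^ k ≤ ∏ j ∈ Finset.range k, m (j + 1) := by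
  calc x ^ k = ∏ _j ∈ Finset.range k, x := by simp
    _ ≤ ∏ j ∈ Finset.range k, m (j + 1) := Finset.prod_le_prod (fun _ _ => hx) fun j hj =>
        hxm.trans (hm (Nat.succ_le_of_lt (Finset.mem_range.1 hj)))

theorem exists_antitone_le_pow_mul_prod_sq {s : ℕ → ℝ} (hs : ∀ k, 0 ≤ s k) (hs0 : s 0 ≤ 1)
    (h : Tendsto (fun k : ℕ => s k ^ ((1 : ℝ) / (2 * k))) atTop (nhds 0)) {r : ℝ} (hr : 0 < r) :
    ∃ m : ℕ → ℝ, Antitone m ∧ (∀ k, 0 < m k) ∧ Tendsto m atTop (nhds 0) ∧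
      ∀ k, s k ≤ r ^ k * (∏ j ∈ Finset.range k, m (j + 1)) ^ 2 := by
  obtain ⟨m, hanti, hpos, hm, hle⟩ := exists_antitone_pos_tendsto_zero_ge h
  have hr' : 0 < √r := Real.sqrt_pos.2 hr
  refine ⟨fun k => m k / √r, fun k l hkl => div_le_div_of_nonneg_right (hanti hkl) hr'.le,
    fun k => div_pos (hpos k) hr', by simpa using hm.div_const (√r), fun k => ?_⟩
  have hroot : s k ≤ ((s k ^ ((1 : ℝ) / (2 * k))) ^ k) ^ 2 := by
    rcases eq_or_ne k 0 with rfl | hk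
    · simpa using hs0
    · have := Real.rpow_inv_natCast_pow (hs k) (mul_ne_zero two_ne_zero hk)
      push_cast at this
      rw [one_div, ← pow_mul, mul_comm k, this]
  have hroot_nonneg : 0 ≤ s k ^ ((1 : ℝ) / (2 * k)) := Real.rpow_nonneg (hs k) _
  calc s k ≤ ((s k ^ ((1 : ℝ) / (2 * k))) ^ k) ^ 2 := hroot
    _ ≤ (∏ j ∈ Finset.range k, m (j + 1)) ^ 2 := by
        gcongr
        exact pow_le_prod_range_of_antitone hanti hroot_nonneg (hle k)
    _ = r ^ k * (∏ j ∈ Finset.range k, m (j + 1) / √r) ^ 2 := by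
        rw [Finset.prod_div_distrib, Finset.prod_const, Finset.card_range, div_pow, ← pow_mul,
          mul_comm k, pow_mul, Real.sq_sqrt hr.le, mul_div_cancel₀ _ (pow_pos hr k).ne']

theorem tendsto_prod_rpow_inv_zero {u : ℕ → ℝ} (hu : ∀ k, 0 ≤ u k)
    (h : Tendsto u atTop (nhds 0)) :
    Tendsto (fun k : ℕ => (∏ j ∈ Finset.range k, u j) ^ ((k : ℝ)⁻¹)) atTop (nhds 0) := by
  refine squeeze_zero' (.of_forall fun k =>
    Real.rpow_nonneg (Finset.prod_nonneg fun j _ => hu j) _) ?_ h.cesaro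
  filter_upwards [eventually_gt_atTop 0] with k hk
  have hAMGM := Real.geom_mean_le_arith_mean (Finset.range k) (fun _ => 1) u
    (fun _ _ => zero_le_one) (by simpa using hk) (fun j _ => hu j)
  simpa [div_eq_inv_mul] using hAMGM

end ScalarSequences

section ColumnOperator

variable {𝕜 ι E : Type*} {F : ι → Type*} [NontriviallyNormedField 𝕜]
  [NormedAddCommGroup E] [NormedSpace 𝕜 E]
  [∀ i, NormedAddCommGroup (F i)] [∀ i, NormedSpace 𝕜 (F i)]

/-- `C` bounds the square of the norm of the column `x ↦ (A i x)ᵢ` into the `ℓ²`-sum. It is phrased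
with finite sums, so that it also asserts that the column takes values in `ℓ²`. -/
def IsColumnBound (A : ∀ i, E →L[𝕜] F i) (C : ℝ) : Prop :=
  ∀ (x : E) (s : Finset ι), ∑ i ∈ s, ‖A i x‖ ^ 2 ≤ C * ‖x‖ ^ 2

variable {A : ∀ i, E →L[𝕜] F i} {C : ℝ}

theorem IsColumnBound.memℓp (hA : IsColumnBound A C) (x : E) : Memℓp (fun i => A i x) 2 :=
  memℓp_gen' (C := C * ‖x‖ ^ 2) fun s => by simpa using hA x s

/-- The column operator `x ↦ (A i x)ᵢ` from `E` into the `ℓ²`-sum of the spaces `F i`. -/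
def columnOperator (A : ∀ i, E →L[𝕜] F i) (hA : IsColumnBound A C) : E →L[𝕜] lp F 2 :=
  LinearMap.mkContinuous
    { toFun := fun x => ⟨fun i => A i x, hA.memℓp x⟩
      map_add' := fun x y => lp.ext <| funext fun i => map_add (A i) x y
      map_smul' := fun c x => lp.ext <| funext fun i => map_smul (A i) c x }
    √C fun x => lp.norm_le_of_forall_sum_le (by simp) (by positivity) fun s => by
      have hC : C ≤ √C ^ 2 := Real.sq_sqrt' (x := C) ▸ le_max_left C 0
      simpa [mul_pow] using (hA x s).trans (mul_le_mul_of_nonneg_right hC (sq_nonneg ‖x‖))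

@[simp]
theorem columnOperator_apply (hA : IsColumnBound A C) (x : E) (i : ι) :
    columnOperator A hA x i = A i x := rfl

theorem norm_columnOperator_le (hA : IsColumnBound A C) : ‖columnOperator A hA‖ ≤ √C :=
  LinearMap.mkContinuous_norm_le _ (Real.sqrt_nonneg C) _

end ColumnOperator

section RowOperator

variable {𝕜 ι E : Type*} {F : ι → Type*} [RCLike 𝕜] [Fintype ι]
  [NormedAddCommGroup E] [InnerProductSpace 𝕜 E] [CompleteSpace E]
  [∀ i, NormedAddCommGroup (F i)] [∀ i, InnerProductSpace 𝕜 (F i)] [∀ i, CompleteSpace (F i)]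

theorem re_inner_sum_comp_adjoint (A : ∀ i, F i →L[𝕜] E) (x : E) :
    RCLike.re (inner 𝕜 ((∑ i, A i ∘L adjoint (A i)) x) x) = ∑ i, ‖adjoint (A i) x‖ ^ 2 := by
  simp only [sum_apply, sum_inner, map_sum, comp_apply, ← inner_self_eq_norm_sq (𝕜 := 𝕜),
    adjoint_inner_right]

theorem norm_sum_comp_adjoint_le_iff (A : ∀ i, F i →L[𝕜] E) {C : ℝ} (hC : 0 ≤ C) :
    ‖∑ i, A i ∘L adjoint (A i)‖ ≤ C ↔ ∀ x, ∑ i, ‖adjoint (A i) x‖ ^ 2 ≤ C * ‖x‖ ^ 2 := by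
  refine ⟨fun h x => ?_, fun h => ?_⟩
  · calc ∑ i, ‖adjoint (A i) x‖ ^ 2
        = RCLike.re (inner 𝕜 ((∑ i, A i ∘L adjoint (A i)) x) x) :=
          (re_inner_sum_comp_adjoint A x).symm
      _ ≤ ‖(∑ i, A i ∘L adjoint (A i)) x‖ * ‖x‖ := re_inner_le_norm _ _
      _ ≤ C * ‖x‖ * ‖x‖ := by
          gcongr
          exact le_of_opNorm_le _ h x
      _ = C * ‖x‖ ^ 2 := by ring
  · have hpos : (∑ i, A i ∘L adjoint (A i)).IsPositive :=
      isPositive_sum _ fun i _ => isPositive_self_comp_adjoint (A i)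
    rw [norm_eq_iSup_rayleighQuotient _ hpos.isSymmetric]
    refine ciSup_le fun x => ?_
    rw [rayleighQuotient, reApplyInnerSelf_apply, re_inner_sum_comp_adjoint,
      abs_of_nonneg (by positivity)]
    exact div_le_of_le_mul₀ (by positivity) hC (h x)

end RowOperator

section WeightedPullback

variable {𝕜 ι κ E : Type*} [NontriviallyNormedField 𝕜] [NormedAddCommGroup E]
  [NormedSpace 𝕜 E] {f : ι → κ} {w : ι → 𝕜} {C : ℝ}

theorem isColumnBound_smul_evalCLM (hf : Function.Injective f) (hw : ∀ i, ‖w i‖ ≤ C) :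
    IsColumnBound (fun i => w i • lp.evalCLM 𝕜 (fun _ : κ => E) 2 (f i)) (C ^ 2) := fun x s => by
  calc ∑ i ∈ s, ‖w i • x (f i)‖ ^ 2 ≤ ∑ i ∈ s, C ^ 2 * ‖x (f i)‖ ^ 2 := by
        refine Finset.sum_le_sum fun i _ => ?_
        rw [norm_smul, mul_pow]
        gcongr
        exact hw i
    _ = C ^ 2 * ∑ k ∈ s.map ⟨f, hf⟩, ‖x k‖ ^ 2 := by simp [Finset.mul_sum]
    _ ≤ C ^ 2 * ‖x‖ ^ 2 := by
        gcongr
        simpa using lp.sum_rpow_le_norm_rpow (p := 2) (by simp) x (s.map ⟨f, hf⟩)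

variable (E) in
/-- The weighted composition operator `x ↦ (w i • x (f i))ᵢ` on `ℓ²`, for `f` injective and `w`
bounded; its adjoint is the weighted shift along `f`. -/
def weightedPullback (hf : Function.Injective f) (hw : ∀ i, ‖w i‖ ≤ C) :
    lp (fun _ : κ => E) 2 →L[𝕜] lp (fun _ : ι => E) 2 :=
  columnOperator _ (isColumnBound_smul_evalCLM hf hw)

@[simp]
theorem weightedPullback_apply (hf : Function.Injective f) (hw : ∀ i, ‖w i‖ ≤ C)
    (x : lp (fun _ : κ => E) 2) (i : ι) :
    weightedPullback E hf hw x i = w i • x (f i) := rfl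

theorem norm_weightedPullback_le (hf : Function.Injective f) (hw : ∀ i, ‖w i‖ ≤ C) (hC : 0 ≤ C) :
    ‖weightedPullback E hf hw‖ ≤ C :=
  (norm_columnOperator_le _).trans_eq (Real.sqrt_sq hC)

theorem weightedPullback_sub_sum_single (hf : Function.Injective f) (hw : ∀ i, ‖w i‖ ≤ C)
    {s : Finset ι} {δ : ℝ}
    (hs : ∀ i, ‖(s : Set ι)ᶜ.indicator w i‖ ≤ δ) :
    weightedPullback E hf hw - ∑ i ∈ s, lp.singleContinuousLinearMap 𝕜 (fun _ : ι => E) 2 i ∘L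
      (w i • lp.evalCLM 𝕜 (fun _ : κ => E) 2 (f i)) = weightedPullback E hf hs := by
  ext x j
  simp only [sub_apply, lp.coeFn_sub, Pi.sub_apply, sum_apply, lp.coeFn_sum, Finset.sum_apply,
    comp_apply, lp.singleContinuousLinearMap_apply, lp.single_apply, weightedPullback_apply]
  by_cases hj : j ∈ s <;> simp [hj, Finset.sum_pi_single, lp.evalCLM]

end WeightedPullback

section AdjointWeightedPullback

variable {𝕜 ι κ E : Type*} [RCLike 𝕜] [NormedAddCommGroup E] [InnerProductSpace 𝕜 E] {f : ι → κ}
  {w : ι → 𝕜} {C : ℝ}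

theorem adjoint_weightedPullback_single [CompleteSpace E] (hf : Function.Injective f)
    (hw : ∀ i, ‖w i‖ ≤ C) (i : ι) (h : E) :
    adjoint (weightedPullback E hf hw) (lp.single 2 i h) =
      starRingEnd 𝕜 (w i) • lp.single 2 (f i) h := by
  refine ext_inner_right 𝕜 fun y => ?_
  rw [adjoint_inner_left, lp.inner_single_left, weightedPullback_apply, inner_smul_left,
    lp.inner_single_left, inner_smul_right, RCLike.conj_conj]

theorem isCompactOperator_adjoint_weightedPullback [ProperSpace E] (hf : Function.Injective f)
    (hw : ∀ i, ‖w i‖ ≤ C) (hw0 : Tendsto w cofinite (nhds 0)) :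
    IsCompactOperator (adjoint (weightedPullback E hf hw)) := by
  have hclosed : IsClosed {B : lp (fun _ : ι => E) 2 →L[𝕜] lp (fun _ : κ => E) 2 |
      IsCompactOperator B} := isClosed_setOfPred_isCompactOperator
  refine hclosed.closure_subset (Metric.mem_closure_iff.2 fun ε hε => ?_)
  have hfin : {i | ¬ ‖w i‖ < ε / 2}.Finite :=
    hw0.norm.eventually_lt_const (u := ε / 2) (by simpa)
  have htail (i : ι) : ‖(hfin.toFinset : Set ι)ᶜ.indicator w i‖ ≤ ε / 2 := by
    by_cases hi : ‖w i‖ < ε / 2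
    · exact (norm_indicator_le_norm_self w i).trans hi.le
    · simpa [hi] using (half_pos hε).le
  refine ⟨adjoint (∑ i ∈ hfin.toFinset, lp.singleContinuousLinearMap 𝕜 (fun _ : ι => E) 2 i ∘L
    (w i • lp.evalCLM 𝕜 (fun _ : κ => E) 2 (f i))), ?_, ?_⟩
  · rw [map_sum]
    refine (compactOperator (RingHom.id 𝕜) (lp (fun _ : ι => E) 2)
      (lp (fun _ : κ => E) 2)).sum_mem fun i _ => ?_
    rw [adjoint_comp]
    have hcoord : IsCompactOperator (adjoint (w i • lp.evalCLM 𝕜 (fun _ : κ => E) 2 (f i))) :=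
      isCompactOperator_of_locallyCompactSpace_rng _
    exact hcoord.comp_clm _
  · rw [dist_eq_norm, ← map_sub, LinearIsometryEquiv.norm_map,
      weightedPullback_sub_sum_single hf hw htail]
    exact (norm_weightedPullback_le hf htail (half_pos hε).le).trans_lt (half_lt_self hε)

end AdjointWeightedPullback

section Words

variable {n k : ℕ}

theorem length_wordOfFn (f : Fin k → Fin n) : (wordOfFn f).length = k :=
  List.length_ofFn

theorem wordOfFn_mul_injective :
    Function.Injective fun p : (Fin k → Fin n) × Word n => wordOfFn p.1 * p.2 := by
  rintro ⟨f, γ⟩ ⟨g, δ⟩ h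
  obtain ⟨hfg, hγδ⟩ := List.append_inj
    (show List.ofFn f ++ γ.toList = List.ofFn g ++ δ.toList from h) (by simp)
  exact Prod.ext (List.ofFn_injective hfg) hγδ

theorem tendsto_length_cofinite : Tendsto (FreeMonoid.length : Word n → ℕ) cofinite atTop := by
  rw [← Nat.cofinite_eq_atTop]
  exact .cofinite_of_finite_preimage_singleton fun k => List.finite_length_eq (Fin n) k

theorem sum_le_tsum_of_sum_wordOfFn_le {g : Word n → ℝ} (hg : ∀ α, 0 ≤ g α) {u : ℕ → ℝ}
    (hu : Summable u) (h : ∀ k, ∑ f : Fin k → Fin n, g (wordOfFn f) ≤ u k)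
    (s : Finset (Word n)) : ∑ α ∈ s, g α ≤ ∑' k, u k := by
  have hu_nonneg (k : ℕ) : 0 ≤ u k := (Finset.sum_nonneg fun _ _ => hg _).trans (h k)
  let e : Word n ≃ Σ k, Fin k → Fin n := List.equivSigmaTuple
  let t : Finset (Σ k, Fin k → Fin n) := s.map e.toEmbedding
  calc ∑ α ∈ s, g α = ∑ p ∈ t, g (e.symm p) := by simp [t]
    _ ≤ ∑ p ∈ (t.image Sigma.fst).sigma fun k => (Finset.univ : Finset (Fin k → Fin n)),
          g (e.symm p) :=
        Finset.sum_le_sum_of_subset_of_nonneg (fun p hp => by simpa using ⟨p.2, hp⟩)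
          fun _ _ _ => hg _
    _ = ∑ k ∈ t.image Sigma.fst, ∑ f : Fin k → Fin n, g (wordOfFn f) := Finset.sum_sigma _ _ _
    _ ≤ ∑ k ∈ t.image Sigma.fst, u k := Finset.sum_le_sum fun k _ => h k
    _ ≤ ∑' k, u k := hu.sum_le_tsum _ fun k _ => hu_nonneg k

end Words

section WordProducts

variable {n : ℕ}

@[simp]
theorem muProd_one (μ : Word n → ℝ) (γ : Word n) : muProd μ 1 γ = 1 := rfl

theorem muProd_of_mul (μ : Word n → ℝ) (i : Fin n) (β γ : Word n) :
    muProd μ (FreeMonoid.of i * β) γ = μ (FreeMonoid.of i * β * γ) * muProd μ β γ := by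
  rw [muProd, FreeMonoid.length_mul, FreeMonoid.length_of, add_comm, List.range_succ_eq_map]
  simp [muProd, Function.comp_def]

variable {H : Type*} [NormedAddCommGroup H] [InnerProductSpace ℂ H]

@[simp]
theorem wordOp_one (T : Fin n → H →L[ℂ] H) : wordOp T 1 = 1 := rfl

theorem wordOp_of_mul (T : Fin n → H →L[ℂ] H) (i : Fin n) (α : Word n) :
    wordOp T (FreeMonoid.of i * α) = T i * wordOp T α := by
  simp [wordOp]

variable [CompleteSpace H]

theorem adjoint_wordOp_one_apply (T : Fin n → H →L[ℂ] H) (x : H) :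
    adjoint (wordOp T 1) x = x := by
  simp [← star_eq_adjoint]

theorem adjoint_wordOp_of_mul_apply (T : Fin n → H →L[ℂ] H) (i : Fin n) (α : Word n) (x : H) :
    adjoint (wordOp T (FreeMonoid.of i * α)) x = adjoint (wordOp T α) (adjoint (T i) x) := by
  rw [wordOp_of_mul, mul_def, adjoint_comp, comp_apply]

theorem norm_rowSum_le_iff (T : Fin n → H →L[ℂ] H) (k : ℕ) {C : ℝ} (hC : 0 ≤ C) :
    ‖rowSum T k‖ ≤ C ↔
      ∀ x, ∑ f : Fin k → Fin n, ‖adjoint (wordOp T (wordOfFn f)) x‖ ^ 2 ≤ C * ‖x‖ ^ 2 :=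
  norm_sum_comp_adjoint_le_iff (fun f : Fin k → Fin n => wordOp T (wordOfFn f)) hC

theorem norm_rowSum_zero_le (T : Fin n → H →L[ℂ] H) : ‖rowSum T 0‖ ≤ 1 := by
  refine (norm_rowSum_le_iff T 0 zero_le_one).2 fun x => ?_
  rw [Fintype.sum_unique, one_mul]
  exact (congrArg (‖·‖ ^ 2) (adjoint_wordOp_one_apply T x)).le

end WordProducts

section WeightedShift

variable {n : ℕ} {μ : Word n → ℝ} {C : ℝ}

/-- The operator `W i ^* ⊗ I_E` on `ℓ²(𝔽ₙ⁺; E)`, where `W` is the weighted left multi-shift with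
weights `μ`. -/
def backwardShift (E : Type*) [NormedAddCommGroup E] [NormedSpace ℂ E]
    (hμ : ∀ i α, |μ (FreeMonoid.of i * α)| ≤ C) (i : Fin n) :
    lp (fun _ : Word n => E) 2 →L[ℂ] lp (fun _ : Word n => E) 2 :=
  weightedPullback E (w := fun α => (μ (FreeMonoid.of i * α) : ℂ))
    (mul_right_injective (FreeMonoid.of i)) fun α => by simpa using hμ i α

@[simp]
theorem backwardShift_apply {E : Type*} [NormedAddCommGroup E] [NormedSpace ℂ E]
    (hμ : ∀ i α, |μ (FreeMonoid.of i * α)| ≤ C) (i : Fin n) (x : lp (fun _ : Word n => E) 2)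
    (γ : Word n) :
    backwardShift E hμ i x γ = (μ (FreeMonoid.of i * γ) : ℂ) • x (FreeMonoid.of i * γ) := rfl

/-- The operator `W i ⊗ I_E` on `ℓ²(𝔽ₙ⁺; E)`, where `W` is the weighted left multi-shift with
weights `μ`; it is `W i` itself for `E = ℂ`. -/
def weightedShift (E : Type*) [NormedAddCommGroup E] [InnerProductSpace ℂ E] [CompleteSpace E]
    (hμ : ∀ i α, |μ (FreeMonoid.of i * α)| ≤ C) (i : Fin n) :
    lp (fun _ : Word n => E) 2 →L[ℂ] lp (fun _ : Word n => E) 2 :=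
  adjoint (backwardShift E hμ i)

variable {E : Type*} [NormedAddCommGroup E] [InnerProductSpace ℂ E]

theorem isWeightedShiftTensor_weightedShift [CompleteSpace E]
    (hμ : ∀ i α, |μ (FreeMonoid.of i * α)| ≤ C) : IsWeightedShiftTensor μ (weightedShift E hμ) :=
  fun i α h => (adjoint_weightedPullback_single _ _ α h).trans (by rw [Complex.conj_ofReal])

theorem isWeightedShift_weightedShift (hμ : ∀ i α, |μ (FreeMonoid.of i * α)| ≤ C) :
    IsWeightedShift μ (weightedShift ℂ hμ) :=
  fun i α => isWeightedShiftTensor_weightedShift hμ i α 1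

theorem isCompactOperator_weightedShift [ProperSpace E]
    (hμ : ∀ i α, |μ (FreeMonoid.of i * α)| ≤ C) {i : Fin n}
    (hμ0 : Tendsto (fun α => μ (FreeMonoid.of i * α)) cofinite (nhds 0)) :
    IsCompactOperator (weightedShift E hμ i) :=
  isCompactOperator_adjoint_weightedPullback _ _ (by simpa using hμ0.ofReal)

variable [CompleteSpace E]

theorem adjoint_weightedShift (hμ : ∀ i α, |μ (FreeMonoid.of i * α)| ≤ C) (i : Fin n) :
    adjoint (weightedShift E hμ i) = backwardShift E hμ i :=
  adjoint_adjoint _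

theorem adjoint_wordOp_weightedShift_apply (hμ : ∀ i α, |μ (FreeMonoid.of i * α)| ≤ C)
    (α : Word n) (x : lp (fun _ : Word n => E) 2) (γ : Word n) :
    adjoint (wordOp (weightedShift E hμ) α) x γ = (muProd μ α γ : ℂ) • x (α * γ) := by
  induction α using FreeMonoid.inductionOn' generalizing x with
  | one => rw [adjoint_wordOp_one_apply, muProd_one, Complex.ofReal_one, one_smul, one_mul]
  | of_mul i α ih =>
    rw [adjoint_wordOp_of_mul_apply, ih, adjoint_weightedShift, backwardShift_apply, smul_smul,
      muProd_of_mul, mul_assoc, Complex.ofReal_mul, mul_comm (muProd μ α γ : ℂ)]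

theorem norm_rowSum_weightedShift_le (hμ : ∀ i α, |μ (FreeMonoid.of i * α)| ≤ C) {k : ℕ} {b : ℝ}
    (hb : ∀ (f : Fin k → Fin n) (γ : Word n), |muProd μ (wordOfFn f) γ| ≤ b) :
    ‖rowSum (weightedShift E hμ) k‖ ≤ b ^ 2 := by
  refine (norm_rowSum_le_iff _ k (sq_nonneg b)).2 fun x => ?_
  have hcol : IsColumnBound (fun p : (Fin k → Fin n) × Word n => (muProd μ (wordOfFn p.1) p.2 : ℂ) •
      lp.evalCLM ℂ (fun _ : Word n => E) 2 (wordOfFn p.1 * p.2)) (b ^ 2) :=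
    isColumnBound_smul_evalCLM wordOfFn_mul_injective fun p => by simpa using hb p.1 p.2
  have hnorm (y : lp (fun _ : Word n => E) 2) : HasSum (fun γ => ‖y γ‖ ^ 2) (‖y‖ ^ 2) := by
    simpa using lp.hasSum_norm (p := 2) (by simp) y
  refine hasSum_le_of_sum_le (hasSum_sum fun f (_ : f ∈ Finset.univ) =>
    hnorm (adjoint (wordOp (weightedShift E hμ) (wordOfFn f)) x)) fun s => ?_
  simp only [adjoint_wordOp_weightedShift_apply]
  rw [Finset.sum_comm, ← Finset.sum_product']
  exact hcol x _

end WeightedShift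

section RadialWeights

variable {n : ℕ} {m : ℕ → ℝ}

/-- The weight sequence on words that depends on the length only, through `m`. -/
def radialWeight (n : ℕ) (m : ℕ → ℝ) (β : Word n) : ℝ := m β.length

theorem radialWeight_of_mul (m : ℕ → ℝ) (i : Fin n) (α : Word n) :
    radialWeight n m (FreeMonoid.of i * α) = m (α.length + 1) := by
  rw [radialWeight, FreeMonoid.length_mul, FreeMonoid.length_of, add_comm]

theorem muProd_radialWeight (m : ℕ → ℝ) (β γ : Word n) :
    muProd (radialWeight n m) β γ = ∏ j ∈ Finset.range β.length, m (γ.length + j + 1) := by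
  induction β using FreeMonoid.inductionOn' with
  | one => rfl
  | of_mul i β ih =>
    rw [muProd_of_mul, ih, mul_assoc, radialWeight_of_mul, FreeMonoid.length_mul,
      FreeMonoid.length_mul, FreeMonoid.length_of, add_comm 1, Finset.prod_range_succ,
      add_comm β.length, mul_comm]

theorem tendsto_radialWeight_of_mul (hm : Tendsto m atTop (nhds 0)) (i : Fin n) :
    Tendsto (fun α => radialWeight n m (FreeMonoid.of i * α)) cofinite (nhds 0) := by
  simp only [radialWeight_of_mul]
  exact hm.comp ((tendsto_add_atTop_nat 1).comp tendsto_length_cofinite)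

theorem abs_radialWeight_le (hanti : Antitone m) (hnonneg : ∀ k, 0 ≤ m k) (β : Word n) :
    |radialWeight n m β| ≤ m 0 :=
  (abs_of_nonneg (hnonneg _)).trans_le (hanti (Nat.zero_le _))

theorem abs_muProd_radialWeight_le (hanti : Antitone m) (hnonneg : ∀ k, 0 ≤ m k) (β γ : Word n) :
    |muProd (radialWeight n m) β γ| ≤ ∏ j ∈ Finset.range β.length, m (j + 1) := by
  rw [muProd_radialWeight, abs_of_nonneg (Finset.prod_nonneg fun _ _ => hnonneg _)]
  exact Finset.prod_le_prod (fun _ _ => hnonneg _) fun j _ => hanti (by omega)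

theorem tendsto_norm_rowSum_weightedShift_radialWeight {E : Type*} [NormedAddCommGroup E]
    [InnerProductSpace ℂ E] [CompleteSpace E] (hanti : Antitone m) (hnonneg : ∀ k, 0 ≤ m k)
    (hm : Tendsto m atTop (nhds 0)) {C : ℝ}
    (hμ : ∀ i α, |radialWeight n m (FreeMonoid.of i * α)| ≤ C) :
    Tendsto (fun k : ℕ => ‖rowSum (weightedShift E hμ) k‖ ^ ((1 : ℝ) / (2 * k)))
      atTop (nhds 0) := by
  refine squeeze_zero (fun k => by positivity) (fun k => ?_)
    (tendsto_prod_rpow_inv_zero (fun k => hnonneg (k + 1)) (hm.comp (tendsto_add_atTop_nat 1)))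
  have hprod : 0 ≤ ∏ j ∈ Finset.range k, m (j + 1) := Finset.prod_nonneg fun _ _ => hnonneg _
  calc ‖rowSum (weightedShift E hμ) k‖ ^ ((1 : ℝ) / (2 * k))
      ≤ ((∏ j ∈ Finset.range k, m (j + 1)) ^ 2) ^ ((1 : ℝ) / (2 * k)) := by
        gcongr
        refine norm_rowSum_weightedShift_le hμ fun f γ => ?_
        simpa only [length_wordOfFn] using abs_muProd_radialWeight_le hanti hnonneg (wordOfFn f) γ
    _ = (∏ j ∈ Finset.range k, m (j + 1)) ^ ((k : ℝ)⁻¹) := by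
        rw [one_div, mul_inv, Real.rpow_mul (sq_nonneg _), ← Real.rpow_two,
          Real.rpow_rpow_inv hprod two_ne_zero]

end RadialWeights

section OrbitMap

variable {n : ℕ} {H : Type*} [NormedAddCommGroup H] [InnerProductSpace ℂ H] [CompleteSpace H]

/-- The coefficient at the word `α` of the intertwiner `h ↦ (T_α^* h / muProd μ α 1)_α`, a weighted
form of the Poisson kernel of `T`. -/
def orbitCoeff (T : Fin n → H →L[ℂ] H) (μ : Word n → ℝ) (α : Word n) : H →L[ℂ] H :=
  (muProd μ α 1 : ℂ)⁻¹ • adjoint (wordOp T α)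

variable {T : Fin n → H →L[ℂ] H} {μ : Word n → ℝ} {D : ℝ}

theorem isColumnBound_orbitCoeff {b u : ℕ → ℝ} (hu : Summable u) (hb : ∀ k, 0 < b k)
    (hbμ : ∀ α : Word n, b α.length ≤ |muProd μ α 1|)
    (hT : ∀ k, ‖rowSum T k‖ ≤ u k * b k ^ 2) :
    IsColumnBound (orbitCoeff T μ) (∑' k, u k) := fun x s => by
  rw [← tsum_mul_right]
  refine sum_le_tsum_of_sum_wordOfFn_le (fun α => by positivity) (hu.mul_right _) (fun k => ?_) s
  have hcoeff (f : Fin k → Fin n) : ‖orbitCoeff T μ (wordOfFn f) x‖ ^ 2 ≤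
      (b k ^ 2)⁻¹ * ‖adjoint (wordOp T (wordOfFn f)) x‖ ^ 2 := by
    have hbk : b k ≤ |muProd μ (wordOfFn f) 1| := by
      simpa only [length_wordOfFn] using hbμ (wordOfFn f)
    rw [orbitCoeff, smul_apply, norm_smul, mul_pow, norm_inv, Complex.norm_real, Real.norm_eq_abs,
      ← inv_pow]
    have := hb k
    gcongr
  calc ∑ f : Fin k → Fin n, ‖orbitCoeff T μ (wordOfFn f) x‖ ^ 2
      ≤ (b k ^ 2)⁻¹ * ∑ f : Fin k → Fin n, ‖adjoint (wordOp T (wordOfFn f)) x‖ ^ 2 :=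
        (Finset.sum_le_sum fun f _ => hcoeff f).trans_eq (Finset.mul_sum _ _ _).symm
    _ ≤ (b k ^ 2)⁻¹ * (u k * b k ^ 2 * ‖x‖ ^ 2) := by
        gcongr
        exact (norm_rowSum_le_iff T k ((norm_nonneg _).trans (hT k))).1 (hT k) x
    _ = u k * ‖x‖ ^ 2 := by
        have := (hb k).ne'
        field_simp

theorem norm_le_norm_columnOperator_orbitCoeff (hX : IsColumnBound (orbitCoeff T μ) D) (x : H) :
    ‖x‖ ≤ ‖columnOperator _ hX x‖ := by
  have hempty : columnOperator _ hX x 1 = x := by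
    rw [columnOperator_apply, orbitCoeff, smul_apply, adjoint_wordOp_one_apply, muProd_one,
      Complex.ofReal_one, inv_one, one_smul]
  simpa only [hempty] using lp.norm_apply_le_norm two_ne_zero (columnOperator _ hX x) 1

theorem columnOperator_orbitCoeff_comp_adjoint (hX : IsColumnBound (orbitCoeff T μ) D) {C : ℝ}
    (hμ : ∀ i α, |μ (FreeMonoid.of i * α)| ≤ C) {i : Fin n}
    (hμ0 : ∀ α, μ (FreeMonoid.of i * α) ≠ 0) :
    columnOperator _ hX ∘L adjoint (T i) = backwardShift H hμ i ∘L columnOperator _ hX := by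
  ext x α
  have hμα : (μ (FreeMonoid.of i * α) : ℂ) ≠ 0 := Complex.ofReal_ne_zero.2 (hμ0 α)
  simp only [comp_apply, columnOperator_apply, backwardShift_apply, orbitCoeff, smul_apply,
    adjoint_wordOp_of_mul_apply, muProd_of_mul, mul_one, smul_smul]
  rw [Complex.ofReal_mul, mul_inv, mul_inv_cancel_left₀ hμα]

end OrbitMap

theorem stmt_15 (n : ℕ) (hn : 1 ≤ n)
    {H : Type*} [NormedAddCommGroup H] [InnerProductSpace ℂ H] [CompleteSpace H]
    (T : Fin n → H →L[ℂ] H)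
    (hT : Tendsto (fun k : ℕ => ‖rowSum T k‖ ^ ((1 : ℝ) / (2 * k))) atTop (nhds 0)) :
    ∃ μ : Word n → ℝ,
      (∀ β : Word n, 1 ≤ FreeMonoid.length β → 0 ≤ μ β) ∧ BddWeights μ ∧
      ∃ W : Fin n → Fock n →L[ℂ] Fock n, IsWeightedShift μ W ∧
        Tendsto (fun k : ℕ => ‖rowSum W k‖ ^ ((1 : ℝ) / (2 * k))) atTop (nhds 0) ∧
        (∀ i : Fin n, IsCompactOperator ⇑(W i)) ∧
        ∃ Wt : Fin n → lp (fun _ : Word n => H) 2 →L[ℂ] lp (fun _ : Word n => H) 2,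
          IsWeightedShiftTensor μ Wt ∧
          ∃ (X : H →L[ℂ] lp (fun _ : Word n => H) 2) (c : ℝ), 0 < c ∧
            (∀ h : H, c * ‖h‖ ≤ ‖X h‖) ∧
            (∀ i : Fin n, ∀ y ∈ Set.range X, adjoint (Wt i) y ∈ Set.range X) ∧
            (∀ i : Fin n, X.comp (adjoint (T i)) = (adjoint (Wt i)).comp X) := by
  obtain ⟨m, hanti, hpos, hm, hTm⟩ := exists_antitone_le_pow_mul_prod_sq
    (fun k => norm_nonneg (rowSum T k)) (norm_rowSum_zero_le T) hT (r := 1 / 4) (by norm_num)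
  have hnonneg (k : ℕ) : 0 ≤ m k := (hpos k).le
  have hμ (i : Fin n) (α : Word n) : |radialWeight n m (FreeMonoid.of i * α)| ≤ m 0 :=
    abs_radialWeight_le hanti hnonneg _
  have hX : IsColumnBound (orbitCoeff T (radialWeight n m)) (∑' k, (1 / 4) ^ k) :=
    isColumnBound_orbitCoeff (summable_geometric_of_lt_one (by norm_num) (by norm_num))
      (fun k => Finset.prod_pos fun j _ => hpos (j + 1))
      (fun α => by simpa [muProd_radialWeight] using le_abs_self _) hTm
  have hXT (i : Fin n) : columnOperator _ hX ∘L adjoint (T i) =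
      adjoint (weightedShift H hμ i) ∘L columnOperator _ hX := by
    rw [adjoint_weightedShift]
    exact columnOperator_orbitCoeff_comp_adjoint hX hμ fun α => (hpos _).ne'
  refine ⟨radialWeight n m, fun β _ => hnonneg _,
    fun i => ⟨m 0, Set.forall_mem_range.2 fun α => (le_abs_self _).trans (hμ i α)⟩,
    weightedShift ℂ hμ, isWeightedShift_weightedShift hμ,
    tendsto_norm_rowSum_weightedShift_radialWeight hanti hnonneg hm hμ,
    fun i => isCompactOperator_weightedShift hμ (tendsto_radialWeight_of_mul hm i),
    weightedShift H hμ, isWeightedShiftTensor_weightedShift hμ, columnOperator _ hX, 1, one_pos,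
    fun h => (one_mul ‖h‖).trans_le (norm_le_norm_columnOperator_orbitCoeff hX h), ?_, hXT⟩
  rintro i _ ⟨x, rfl⟩
  exact ⟨adjoint (T i) x, DFunLike.congr_fun (hXT i) x⟩

end
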